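/- For every constant β > 0 there exist c > 0 and n₀ such that for all n ≥ n₀, the number of independent sets I in the hypercube graph Qₙ with min{|I ∩ ℰ|, |I ∩ 𝒪|} > β·2ⁿ is at most 2^(2^(n−1) − 2^(n/2 − c·√n)). -/

import Mathlib

/-- `V n` is the vector space `F₂ⁿ`. -/
abbrev V (n : ℕ) : Type := Fin n → ZMod 2

/-- The hypercube graph `Qₙ`: `x` and `y` are adjacent iff `x + y` has Hamming
weight `1` (equivalently, the Hamming distance of `x` and `y` is `1`). -/
def Q (n : ℕ) : SimpleGraph (V n) :=
  SimpleGraph.fromRel (fun x y => hammingDist x y = 1)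

/-- `ℰ`: the vectors of even Hamming weight. -/
def evens (n : ℕ) : Finset (V n) :=
  Finset.univ.filter (fun x => Even (hammingNorm x))

/-- `𝒪`: the vectors of odd Hamming weight. -/
def odds (n : ℕ) : Finset (V n) :=
  Finset.univ.filter (fun x => Odd (hammingNorm x))

/-!
Every independent set lies in one of few containers, sets inducing a subgraph of small maximum
degree: an independent set `I` has a small subset `T` such that all its vertices have few neighbours
outside the neighbourhood of `T`, and `T` determines a container of `I`. With degree bound `n / 20`
there are only `exp (O (2 ^ n * log n / n))` containers.

In a container `C` fix a maximal matching of `ν` edges and let `D` be the independent set of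
unmatched vertices. A matched pair meets an independent set in three ways rather than four, so `C`
contains at most `3 ^ ν * 2 ^ #D` independent sets. Double counting the edges between the parity
classes gives `#D ≤ 2 ^ (n - 1) - 1.9 * ν`, so a large `ν` already saves enough. If `ν` is small,
then `D` is balanced along with `C`, and dropping a coordinate turns its parity classes into two
sets of constant density in `Q (n - 1)` at distance at least two. These are separated by a set of
size of order `2 ^ n / √n`, by a Talagrand-type inequality for the square root of the boundary
degree proved by induction on the dimension.

In both cases the exponent drops below `2 ^ (n - 1)` by an amount of order `2 ^ n / √n`, which
exceeds the logarithm of the number of containers.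
-/

open Finset

section Containers

theorem exists_subset_forall_card_sdiff_biUnion_lt {ι α : Type*} [DecidableEq α] (I : Finset ι)
    (N : ι → Finset α) {ψ : ℕ} (hψ : 0 < ψ) :
    ∃ T ⊆ I, #T * ψ ≤ #(T.biUnion N) ∧ ∀ v ∈ I, #(N v \ T.biUnion N) < ψ := by
  classical
  obtain ⟨T, hT, hmax⟩ := exists_max_image {T ∈ I.powerset | #T * ψ ≤ #(T.biUnion N)} card
    ⟨∅, by simp⟩
  simp only [mem_filter, mem_powerset] at hT hmax
  refine ⟨T, hT.1, hT.2, fun v hv ↦ ?_⟩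
  by_contra! hcov
  have hvT : v ∉ T := fun hvT ↦ by
    rw [sdiff_eq_empty_iff_subset.2 (subset_biUnion_of_mem N hvT), card_empty] at hcov
    omega
  have hcard := hmax (insert v T) ⟨insert_subset hv hT.1, by
    rw [card_insert_of_notMem hvT, biUnion_insert, ← sdiff_union_self_eq_union,
      card_union_of_disjoint sdiff_disjoint]
    linarith [hT.2]⟩
  rw [card_insert_of_notMem hvT] at hcard
  omega

/-- Weighting each set `T` by `s ^ (-#T)` makes the total weight `(1 + 1 / s) ^ #α`. -/
theorem card_filter_card_le_div_le_exp {α : Type*} [Fintype α] {s : ℝ} (hs : 1 ≤ s) :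
    (#{T : Finset α | (#T : ℝ) ≤ Fintype.card α / s} : ℝ) ≤
      Real.exp (Fintype.card α / s * (Real.log s + 1)) := by
  have hs0 : 0 < s := by linarith
  set N := Fintype.card α
  have weight_ge : ∀ T ∈ ({T : Finset α | (#T : ℝ) ≤ N / s} : Finset (Finset α)),
      1 ≤ Real.exp (N / s * Real.log s) * (1 / s) ^ #T := fun T hT ↦ by
    have hpow : (1 / s) ^ #T = Real.exp (-(#T * Real.log s)) := by
      rw [Real.exp_neg, Real.exp_nat_mul, Real.exp_log hs0, one_div, inv_pow]
    rw [hpow, ← Real.exp_add, ← sub_eq_add_neg, ← sub_mul]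
    exact Real.one_le_exp (mul_nonneg (sub_nonneg.2 (mem_filter.1 hT).2) (Real.log_nonneg hs))
  have sum_weight : ∑ T : Finset α, (1 / s) ^ #T = (1 / s + 1) ^ N := by
    simpa using sum_pow_mul_eq_add_pow (1 / s) 1 (univ : Finset α)
  calc (#{T : Finset α | (#T : ℝ) ≤ N / s} : ℝ)
      = ∑ T with (#T : ℝ) ≤ N / s, (1 : ℝ) := by simp
    _ ≤ ∑ T with (#T : ℝ) ≤ N / s, Real.exp (N / s * Real.log s) * (1 / s) ^ #T :=
        sum_le_sum weight_ge
    _ ≤ ∑ T, Real.exp (N / s * Real.log s) * (1 / s) ^ #T :=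
        sum_le_sum_of_subset_of_nonneg (subset_univ _) fun _ _ _ ↦ by positivity
    _ = Real.exp (N / s * Real.log s) * (1 / s + 1) ^ N := by rw [← mul_sum, sum_weight]
    _ ≤ Real.exp (N / s * Real.log s) * Real.exp (1 / s) ^ N := by
        gcongr
        exact Real.add_one_le_exp _
    _ = Real.exp (N / s * (Real.log s + 1)) := by
        rw [← Real.exp_nat_mul, ← Real.exp_add]
        congr 1
        ring

theorem exists_containers {α : Type*} [Fintype α] [DecidableEq α] (G : SimpleGraph α)
    [DecidableRel G.Adj] {ψ : ℕ} (hψ : 0 < ψ) :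
    ∃ 𝒞 : Finset (Finset α),
      (#𝒞 : ℝ) ≤ Real.exp (Fintype.card α / ψ * (Real.log ψ + 1)) ∧
      (∀ C ∈ 𝒞, ∀ x ∈ C, #(G.neighborFinset x ∩ C) < ψ) ∧
      ∀ I : Finset α, G.IsIndepSet I → ∃ C ∈ 𝒞, I ⊆ C := by
  let nbhd (T : Finset α) : Finset α := T.biUnion fun v ↦ G.neighborFinset v
  let container (T : Finset α) : Finset α :=
    {v | v ∉ nbhd T ∧ #(G.neighborFinset v \ nbhd T) < ψ}
  refine ⟨({T | (#T : ℝ) ≤ Fintype.card α / ψ} : Finset (Finset α)).image container, ?_, ?_, ?_⟩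
  · exact (Nat.cast_le.2 card_image_le).trans
      (card_filter_card_le_div_le_exp (Nat.one_le_cast.2 hψ))
  · simp only [mem_image, forall_exists_index, and_imp]
    rintro _ T - rfl x hx
    refine (card_le_card fun z hz ↦ ?_).trans_lt (mem_filter.1 hx).2.2
    rw [mem_inter] at hz
    exact mem_sdiff.2 ⟨hz.1, (mem_filter.1 hz.2).2.1⟩
  · intro I hI
    obtain ⟨T, hTI, hTcard, hT⟩ :=
      exists_subset_forall_card_sdiff_biUnion_lt I (fun v ↦ G.neighborFinset v) hψ
    refine ⟨container T, mem_image_of_mem _ (mem_filter.2 ⟨mem_univ _, ?_⟩), fun v hv ↦ ?_⟩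
    · rw [le_div_iff₀ (Nat.cast_pos.2 hψ)]
      exact_mod_cast hTcard.trans (card_le_univ _)
    · refine mem_filter.2 ⟨mem_univ _, fun hvT ↦ ?_, hT v hv⟩
      obtain ⟨t, ht, htv⟩ := mem_biUnion.1 hvT
      rw [SimpleGraph.mem_neighborFinset] at htv
      exact hI (hTI ht) hv htv.ne htv

end Containers

section IndepSubsets

variable {α : Type*} [DecidableEq α] (G : SimpleGraph α) [DecidableRel G.Adj]

/-- The independent sets of the graph induced by `G` on `C`, as subsets of the ambient vertex
type. -/
def indepSubsets (C : Finset α) : Finset (Finset α) := {I ∈ C.powerset | G.IsIndepSet I}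

variable {G}

theorem mem_indepSubsets {C I : Finset α} : I ∈ indepSubsets G C ↔ I ⊆ C ∧ G.IsIndepSet I := by
  simp [indepSubsets]

theorem card_indepSubsets_le_two_pow (C : Finset α) : #(indepSubsets G C) ≤ 2 ^ #C :=
  (card_filter_le _ _).trans (card_powerset C).le

theorem card_indepSubsets_le_three_mul {u v : α} (huv : G.Adj u v) (C : Finset α) :
    #(indepSubsets G C) ≤ 3 * #(indepSubsets G (C \ {u, v})) := by
  have trace_mem : ∀ I : Finset α, G.IsIndepSet I →
      I ∩ {u, v} ∈ ({∅, {u}, {v}} : Finset (Finset α)) := fun I hI ↦ by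
    have huvI : ¬(u ∈ I ∧ v ∈ I) := fun h ↦ hI h.1 h.2 huv.ne huv
    grind
  calc #(indepSubsets G C)
      ≤ #(({∅, {u}, {v}} : Finset (Finset α)) ×ˢ indepSubsets G (C \ {u, v})) := by
        refine card_le_card_of_injOn (fun I ↦ (I ∩ {u, v}, I \ {u, v})) (fun I hI ↦ ?_)
          fun I _ J _ hIJ ↦ ?_
        · obtain ⟨hIC, hI⟩ := mem_indepSubsets.1 hI
          exact mem_product.2 ⟨trace_mem I hI, mem_indepSubsets.2
            ⟨sdiff_subset_sdiff hIC subset_rfl, hI.mono (by simp)⟩⟩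
        · rw [Prod.mk.injEq] at hIJ
          rw [← sdiff_union_inter I {u, v}, ← sdiff_union_inter J {u, v}, hIJ.1, hIJ.2]
    _ ≤ 3 * #(indepSubsets G (C \ {u, v})) := by
        rw [card_product]
        exact Nat.mul_le_mul_right _ card_le_three

/-- The `2 * ν` removed vertices are those of a maximal matching of `G[C]`. -/
theorem exists_isIndepSet_card_indepSubsets_le (C : Finset α) :
    ∃ D ⊆ C, G.IsIndepSet D ∧ ∃ ν, #C = #D + 2 * ν ∧ #(indepSubsets G C) ≤ 3 ^ ν * 2 ^ #D := by
  induction C using Finset.strongInduction with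
  | H C ih =>
    by_cases hC : G.IsIndepSet C
    · exact ⟨C, subset_rfl, hC, 0, by simp, by simpa using card_indepSubsets_le_two_pow C⟩
    · obtain ⟨u, hu, v, hv, huv⟩ : ∃ u ∈ C, ∃ v ∈ C, G.Adj u v := by
        by_contra! h
        exact hC fun u hu v hv _ ↦ h u hu v hv
      have hsub : {u, v} ⊆ C := insert_subset hu (singleton_subset_iff.2 hv)
      obtain ⟨D, hDC, hD, ν, hν, hcount⟩ :=
        ih (C \ {u, v}) (sdiff_ssubset hsub (insert_nonempty u {v}))
      refine ⟨D, hDC.trans sdiff_subset, hD, ν + 1, ?_, ?_⟩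
      · have := card_sdiff_add_card_eq_card hsub
        rw [card_pair huv.ne] at this
        omega
      · calc #(indepSubsets G C) ≤ 3 * (3 ^ ν * 2 ^ #D) :=
              (card_indepSubsets_le_three_mul huv C).trans (Nat.mul_le_mul_left 3 hcount)
          _ = 3 ^ (ν + 1) * 2 ^ #D := by ring

end IndepSubsets

section DoubleCounting

variable {α : Type*} [Fintype α] [DecidableEq α] {G : SimpleGraph α} [DecidableRel G.Adj]

theorem sum_card_neighborFinset_inter_comm (A B : Finset α) :
    ∑ x ∈ A, #(G.neighborFinset x ∩ B) = ∑ y ∈ B, #(G.neighborFinset y ∩ A) := by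
  convert sum_card_bipartiteAbove_eq_sum_card_bipartiteBelow G.Adj (s := A) (t := B)
    using 3 <;> ext <;> simp [bipartiteAbove, bipartiteBelow, and_comm, G.adj_comm]

theorem sum_card_neighborFinset_inter_le_card_sdiff_mul {A B C D : Finset α} {ψ : ℕ}
    (hAC : A ⊆ C) (hBC : B ⊆ C) (hAB : Disjoint A B)
    (hdeg : ∀ x ∈ C, #(G.neighborFinset x ∩ C) ≤ ψ) (hD : G.IsIndepSet D) :
    ∑ x ∈ A, #(G.neighborFinset x ∩ B) ≤ #(C \ D) * ψ := by
  have sum_le : ∀ X ⊆ C, ∀ Y ⊆ C, ∑ x ∈ X, #(G.neighborFinset x ∩ Y) ≤ #X * ψ :=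
    fun X hX Y hY ↦ sum_le_card_nsmul _ _ _ fun x hx ↦
      (card_le_card (inter_subset_inter_left hY)).trans (hdeg x (hX hx))
  have inter_eq : ∀ x ∈ A ∩ D, G.neighborFinset x ∩ B = G.neighborFinset x ∩ (B \ D) :=
    fun x hx ↦ by
      ext y
      simp only [mem_inter, mem_sdiff, SimpleGraph.mem_neighborFinset]
      exact ⟨fun h ↦ ⟨h.1, h.2, fun hy ↦ hD (mem_inter.1 hx).2 hy h.1.ne h.1⟩,
        fun h ↦ ⟨h.1, h.2.1⟩⟩
  calc ∑ x ∈ A, #(G.neighborFinset x ∩ B)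
      = ∑ x ∈ A ∩ D, #(G.neighborFinset x ∩ (B \ D)) + ∑ x ∈ A \ D, #(G.neighborFinset x ∩ B) := by
        rw [← sum_inter_add_sum_sdiff A D, sum_congr rfl fun x hx ↦ congrArg card (inter_eq x hx)]
    _ = ∑ y ∈ B \ D, #(G.neighborFinset y ∩ (A ∩ D)) + ∑ x ∈ A \ D, #(G.neighborFinset x ∩ B) := by
        rw [sum_card_neighborFinset_inter_comm]
    _ ≤ #(B \ D) * ψ + #(A \ D) * ψ :=
        add_le_add (sum_le _ (sdiff_subset.trans hBC) _ (inter_subset_left.trans hAC))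
          (sum_le _ (sdiff_subset.trans hAC) _ hBC)
    _ = #(B \ D ∪ A \ D) * ψ := by
        rw [← add_mul, card_union_of_disjoint (hAB.symm.mono sdiff_subset sdiff_subset)]
    _ ≤ #(C \ D) * ψ := by
        gcongr
        exact union_subset (sdiff_subset_sdiff hBC subset_rfl) (sdiff_subset_sdiff hAC subset_rfl)

theorem mul_card_le_mul_card_add_sum {d : ℕ} (hreg : G.IsRegularOfDegree d) {E : Finset α}
    (hE : G.IsIndepSet (↑E)ᶜ) (C : Finset α) :
    d * #C ≤ d * #E + ∑ x ∈ C \ E, #(G.neighborFinset x ∩ (C ∩ E)) := by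
  have degree_eq : ∀ x ∈ C \ E,
      d = #(G.neighborFinset x ∩ (C ∩ E)) + #(G.neighborFinset x ∩ (E \ C)) := fun x hx ↦ by
    have hsub : G.neighborFinset x ⊆ E := fun y hy ↦ by
      rw [SimpleGraph.mem_neighborFinset] at hy
      by_contra hyE
      exact hE (mem_sdiff.1 hx).2 hyE hy.ne hy
    rw [← hreg x, ← G.card_neighborFinset_eq_degree, ← card_union_of_disjoint,
      ← inter_union_distrib_left, inter_comm C, union_comm, sdiff_union_inter,
      inter_eq_left.2 hsub]
    exact (disjoint_sdiff_inter E C).symm.mono (by grind) (by grind)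
  have sum_le : ∑ x ∈ C \ E, #(G.neighborFinset x ∩ (E \ C)) ≤ d * #(E \ C) := by
    rw [sum_card_neighborFinset_inter_comm, mul_comm]
    refine sum_le_card_nsmul _ _ _ fun x _ ↦ ?_
    rw [← hreg x, ← G.card_neighborFinset_eq_degree]
    exact card_le_card inter_subset_left
  have hsum : d * #(C \ E) = ∑ x ∈ C \ E, #(G.neighborFinset x ∩ (C ∩ E)) +
      ∑ x ∈ C \ E, #(G.neighborFinset x ∩ (E \ C)) := by
    rw [← sum_add_distrib, ← sum_congr rfl degree_eq, sum_const, smul_eq_mul, mul_comm]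
  calc d * #C = d * #(C \ E) + d * #(C ∩ E) := by rw [← mul_add, card_sdiff_add_card_inter]
    _ ≤ d * (#(E \ C) + #(E ∩ C)) + ∑ x ∈ C \ E, #(G.neighborFinset x ∩ (C ∩ E)) := by
        rw [inter_comm E]
        linarith
    _ = d * #E + ∑ x ∈ C \ E, #(G.neighborFinset x ∩ (C ∩ E)) := by
        rw [card_sdiff_add_card_inter]

theorem mul_card_le_mul_card_add_card_sdiff_mul {d ψ : ℕ} (hreg : G.IsRegularOfDegree d)
    {E C D : Finset α} (hE : G.IsIndepSet (↑E)ᶜ)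
    (hdeg : ∀ x ∈ C, #(G.neighborFinset x ∩ C) ≤ ψ) (hD : G.IsIndepSet D) :
    d * #C ≤ d * #E + #(C \ D) * ψ :=
  (mul_card_le_mul_card_add_sum hreg hE C).trans <| Nat.add_le_add_left
    (sum_card_neighborFinset_inter_le_card_sdiff_mul sdiff_subset inter_subset_left
      (disjoint_sdiff_inter C E) hdeg hD) _

end DoubleCounting

section Hypercube

variable {n : ℕ}

instance : DecidableRel (Q n).Adj :=
  inferInstanceAs (DecidableRel (SimpleGraph.fromRel fun x y : V n ↦ hammingDist x y = 1).Adj)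

theorem Q_adj {x y : V n} : (Q n).Adj x y ↔ hammingDist x y = 1 := by
  rw [Q, SimpleGraph.fromRel_adj, hammingDist_comm y x, or_self, ← hammingDist_ne_zero]
  omega

/-- The neighbour of `x` in `Q n` that differs from `x` in coordinate `i`. -/
def flipCoord (x : V n) (i : Fin n) : V n := x + Pi.single i 1

theorem flipCoord_injective (x : V n) : Function.Injective (flipCoord x) := fun i j h ↦ by
  by_contra hij
  simpa [hij] using congrFun (add_left_cancel h) i

theorem hammingDist_eq_one_iff_exists_flipCoord {x y : V n} :
    hammingDist x y = 1 ↔ ∃ i, flipCoord x i = y := by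
  have ne_iff : ∀ a b : ZMod 2, a ≠ b ↔ a + 1 = b := by decide
  have single_iff : ∀ i, ({j | x j ≠ y j} : Finset (Fin n)) = {i} ↔ flipCoord x i = y := fun i ↦ by
    simp only [Finset.ext_iff, mem_filter, mem_univ, true_and, mem_singleton, funext_iff,
      flipCoord, Pi.add_apply, Pi.single_apply]
    refine forall_congr' fun j ↦ ?_
    rcases eq_or_ne j i with rfl | hj
    · simp [ne_iff]
    · simp [hj]
  simp_rw [hammingDist, card_eq_one, single_iff]

theorem neighborFinset_Q (x : V n) : (Q n).neighborFinset x = univ.image (flipCoord x) := by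
  ext y
  simp [Q_adj, hammingDist_eq_one_iff_exists_flipCoord]

theorem isRegularOfDegree_Q : (Q n).IsRegularOfDegree n := fun x ↦ by
  rw [← SimpleGraph.card_neighborFinset_eq_degree, neighborFinset_Q,
    card_image_of_injective _ (flipCoord_injective x), card_univ, Fintype.card_fin]

theorem natCast_hammingNorm (x : V n) : (hammingNorm x : ZMod 2) = ∑ i, x i := by
  have ite_eq : ∀ a : ZMod 2, (if a ≠ 0 then 1 else 0) = a := by decide
  simp only [hammingNorm, natCast_card_filter, ite_eq]

theorem even_hammingDist {x y : V n} :
    Even (hammingDist x y) ↔ (Even (hammingNorm x) ↔ Even (hammingNorm y)) := by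
  rw [← Nat.even_add, ← ZMod.natCast_eq_zero_iff_even, ← ZMod.natCast_eq_zero_iff_even,
    hammingDist_eq_hammingNorm, Nat.cast_add]
  simp [natCast_hammingNorm, sum_add_distrib, CharTwo.neg_eq]

theorem mem_evens {x : V n} : x ∈ evens n ↔ Even (hammingNorm x) := by simp [evens]

theorem mem_odds {x : V n} : x ∈ odds n ↔ Odd (hammingNorm x) := by simp [odds]

theorem disjoint_evens_odds : Disjoint (evens n) (odds n) :=
  disjoint_filter.2 fun _ _ ↦ Nat.not_odd_iff_even.2

theorem evens_union_odds : evens n ∪ odds n = univ := by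
  ext x
  simp [mem_evens, mem_odds, Nat.even_or_odd]

theorem isIndepSet_compl_evens : (Q n).IsIndepSet (↑(evens n))ᶜ := fun x hx y hy _ hadj ↦ by
  simp only [Set.mem_compl_iff, mem_coe, mem_evens] at hx hy
  have := even_hammingDist.2 (iff_of_false hx hy)
  rw [Q_adj.1 hadj] at this
  exact Nat.not_even_one this

theorem card_inter_evens_add_card_inter_odds (D : Finset (V n)) :
    #(D ∩ evens n) + #(D ∩ odds n) = #D := by
  rw [← card_union_of_disjoint
      (disjoint_evens_odds.mono inter_subset_right inter_subset_right),
    ← inter_union_distrib_left, evens_union_odds, inter_univ]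

theorem card_V : Fintype.card (V n) = 2 ^ n := by simp [V, ZMod.card]

theorem hammingDist_le_hammingDist_tail_add_one (x y : V (n + 1)) :
    hammingDist x y ≤ hammingDist (Fin.tail x) (Fin.tail y) + 1 := by
  rw [hammingDist, Fin.card_filter_univ_succ]
  split_ifs
  · exact le_rfl
  · exact Nat.le_succ _

theorem eq_of_tail_eq_of_even_hammingDist {x y : V (n + 1)} (htail : Fin.tail x = Fin.tail y)
    (heven : Even (hammingDist x y)) : x = y := by
  have hle := hammingDist_le_hammingDist_tail_add_one x y
  rw [htail, hammingDist_self] at hle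
  rw [← hammingDist_eq_zero]
  grind

theorem tail_injOn_evens : Set.InjOn Fin.tail (evens (n + 1) : Set (V (n + 1))) :=
  fun _ hx _ hy htail ↦ eq_of_tail_eq_of_even_hammingDist htail <|
    even_hammingDist.2 (iff_of_true (mem_evens.1 hx) (mem_evens.1 hy))

theorem tail_injOn_odds : Set.InjOn Fin.tail (odds (n + 1) : Set (V (n + 1))) :=
  fun _ hx _ hy htail ↦ eq_of_tail_eq_of_even_hammingDist htail <|
    even_hammingDist.2 (iff_of_false (Nat.not_even_iff_odd.2 (mem_odds.1 hx))
      (Nat.not_even_iff_odd.2 (mem_odds.1 hy)))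

theorem card_evens_succ_le : #(evens (n + 1)) ≤ 2 ^ n := by
  rw [← card_V, ← card_univ]
  exact card_le_card_of_injOn Fin.tail (fun _ _ ↦ mem_univ _) tail_injOn_evens

end Hypercube

section Isoperimetry

variable {n : ℕ}

/-- The number of neighbours of `x` in the hypercube that lie outside `S`. -/
def boundaryDegree (S : Finset (V n)) (x : V n) : ℕ := #{i | flipCoord x i ∉ S}

/-- The part of `S` in the facet `x 0 = a` of the cube, viewed in the cube of one dimension
less. -/
def facet (S : Finset (V (n + 1))) (a : ZMod 2) : Finset (V n) :=
  {v | (Fin.cons a v : V (n + 1)) ∈ S}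

theorem mem_facet {S : Finset (V (n + 1))} {a : ZMod 2} {v : V n} :
    v ∈ facet S a ↔ (Fin.cons a v : V (n + 1)) ∈ S := by
  simp [facet]

theorem sum_eq_sum_facet_add_sum_facet (S : Finset (V (n + 1))) (f : V (n + 1) → ℝ) :
    ∑ x ∈ S, f x = ∑ v ∈ facet S 0, f (Fin.cons 0 v) + ∑ v ∈ facet S 1, f (Fin.cons 1 v) := by
  have sum_univ : ∀ g : V (n + 1) → ℝ,
      ∑ x, g x = ∑ v, g (Fin.cons 0 v) + ∑ v, g (Fin.cons 1 v) := fun g ↦ by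
    rw [← (Fin.consEquiv fun _ : Fin (n + 1) ↦ ZMod 2).sum_comp, Fintype.sum_prod_type]
    exact Fin.sum_univ_two fun a : ZMod 2 ↦ ∑ v : V n, g (Fin.cons a v)
  simpa [facet, sum_filter] using sum_univ fun x ↦ if x ∈ S then f x else 0

theorem card_eq_card_facet_add_card_facet (S : Finset (V (n + 1))) :
    (#S : ℝ) = #(facet S 0) + #(facet S 1) := by
  simpa using sum_eq_sum_facet_add_sum_facet S fun _ ↦ 1

theorem flipCoord_cons_zero (a : ZMod 2) (v : V n) :
    flipCoord (Fin.cons a v : V (n + 1)) 0 = Fin.cons (a + 1) v := by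
  funext i
  refine Fin.cases ?_ (fun j ↦ ?_) i <;> simp [flipCoord]

theorem flipCoord_cons_succ (a : ZMod 2) (v : V n) (i : Fin n) :
    flipCoord (Fin.cons a v : V (n + 1)) i.succ = Fin.cons a (flipCoord v i) := by
  funext j
  refine Fin.cases ?_ (fun j ↦ ?_) j <;> simp [flipCoord, Pi.single_apply]

theorem boundaryDegree_cons (S : Finset (V (n + 1))) (a : ZMod 2) (v : V n) :
    boundaryDegree S (Fin.cons a v) =
      boundaryDegree (facet S a) v + if v ∈ facet S (a + 1) then 0 else 1 := by
  simp only [boundaryDegree, Fin.card_filter_univ_succ, flipCoord_cons_zero, flipCoord_cons_succ,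
    mem_facet]
  split_ifs <;> simp

theorem boundaryDegree_le (S : Finset (V n)) (x : V n) : boundaryDegree S x ≤ n :=
  (card_le_univ _).trans (Fintype.card_fin n).le

theorem sqrt_mul_add_le_sqrt_add_one {h t : ℝ} (hh : 0 ≤ h) (ht : t ∈ Set.Icc 0 1) :
    (1 - t ^ 2) * √h + t ≤ √(h + 1) := by
  have ht2 : 0 ≤ 1 - t ^ 2 := by nlinarith [ht.1, ht.2]
  refine Real.le_sqrt_of_sq_le ?_
  calc ((1 - t ^ 2) * √h + t) ^ 2
      = √h ^ 2 + 1 - (t * √h - (1 - t ^ 2)) ^ 2 - t ^ 2 * (1 - t ^ 2) * (√h ^ 2 + 1) := by ring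
    _ ≤ √h ^ 2 + 1 := by
        have : 0 ≤ t ^ 2 * (1 - t ^ 2) * (√h ^ 2 + 1) := by positivity
        linarith [sq_nonneg (t * √h - (1 - t ^ 2))]
    _ = h + 1 := by rw [Real.sq_sqrt hh]

theorem mul_sum_sqrt_add_mul_card_sub_card_le {α : Type*} [DecidableEq α] (S T : Finset α)
    {f : α → ℝ} (hf : ∀ x, 0 ≤ f x) {t : ℝ} (ht : t ∈ Set.Icc 0 1) :
    (1 - t ^ 2) * ∑ x ∈ S, √(f x) + t * (#S - #T) ≤
      ∑ x ∈ S, √(f x + if x ∈ T then 0 else 1) := by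
  have pointwise : ∀ x ∈ S, (1 - t ^ 2) * √(f x) + t * (if x ∈ T then 0 else 1) ≤
      √(f x + if x ∈ T then 0 else 1) := fun x _ ↦ by
    split_ifs
    · rw [mul_zero, add_zero, add_zero]
      exact mul_le_of_le_one_left (Real.sqrt_nonneg _) (by linarith [sq_nonneg t])
    · rw [mul_one]
      exact sqrt_mul_add_le_sqrt_add_one (hf x) ht
  have card_le : (#S - #T : ℝ) ≤ ∑ x ∈ S, if x ∈ T then 0 else 1 := by
    have sum_eq : ∑ x ∈ S, (if x ∈ T then (0 : ℝ) else 1) = #(S \ T) := by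
      simp [sum_ite, filter_notMem_eq_sdiff]
    rw [sum_eq, sub_le_iff_le_add]
    exact_mod_cast tsub_le_iff_right.1 (le_card_sdiff T S)
  calc (1 - t ^ 2) * ∑ x ∈ S, √(f x) + t * (#S - #T)
      ≤ (1 - t ^ 2) * ∑ x ∈ S, √(f x) + t * ∑ x ∈ S, (if x ∈ T then 0 else 1) := by
        gcongr
        exact ht.1
    _ = ∑ x ∈ S, ((1 - t ^ 2) * √(f x) + t * (if x ∈ T then 0 else 1)) := by
        rw [sum_add_distrib, mul_sum, mul_sum]
    _ ≤ ∑ x ∈ S, √(f x + if x ∈ T then 0 else 1) := sum_le_sum pointwise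

theorem add_mul_one_sub_half_le (p q : ℝ) :
    (p + q) * (1 - (p + q) / 2) ≤
      (1 - (p - q) ^ 2) * (p * (1 - p)) + (p - q) ^ 2 + q * (1 - q) := by
  have : 0 ≤ (p - q) ^ 2 * ((p - 1 / 2) ^ 2 + 1 / 4) := by positivity
  linarith

/-- Passing from `T` to `S` gains at least `t * (#S - #T)` at the cost of a factor `1 - t ^ 2`; the
choice `t = (#S - #T) / M` closes the induction. -/
theorem card_add_card_mul_le_sum_sqrt {α : Type*} [DecidableEq α] {S T : Finset α} {f g : α → ℝ}
    (hf : ∀ x, 0 ≤ f x) (hg : ∀ x, 0 ≤ g x) {M : ℝ} (hM : 0 < M) (hSM : #S ≤ M) (hTS : #T ≤ #S)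
    (hS : #S * (1 - #S / M) ≤ ∑ x ∈ S, √(f x)) (hT : #T * (1 - #T / M) ≤ ∑ x ∈ T, √(g x)) :
    (#S + #T) * (1 - (#S + #T) / (M * 2)) ≤
      ∑ x ∈ S, √(f x + if x ∈ T then 0 else 1) + ∑ x ∈ T, √(g x + if x ∈ S then 0 else 1) := by
  set p := #S / M with hp
  set q := #T / M with hq
  have cardS : (#S : ℝ) = p * M := by rw [hp, div_mul_cancel₀ _ hM.ne']
  have cardT : (#T : ℝ) = q * M := by rw [hq, div_mul_cancel₀ _ hM.ne']
  have hp1 : p ≤ 1 := (div_le_one hM).2 hSM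
  have hq0 : 0 ≤ q := div_nonneg (Nat.cast_nonneg _) hM.le
  have hqp : q ≤ p := div_le_div_of_nonneg_right (Nat.cast_le.2 hTS) hM.le
  have hpq : p - q ∈ Set.Icc (0 : ℝ) 1 := ⟨by linarith, by linarith⟩
  have gainS := mul_sum_sqrt_add_mul_card_sub_card_le S T hf hpq
  have gainT := mul_sum_sqrt_add_mul_card_sub_card_le T S hg (t := 0) (by simp)
  calc (#S + #T) * (1 - (#S + #T) / (M * 2))
      = M * ((p + q) * (1 - (p + q) / 2)) := by
        rw [cardS, cardT]
        field_simp
    _ ≤ M * ((1 - (p - q) ^ 2) * (p * (1 - p)) + (p - q) ^ 2 + q * (1 - q)) := by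
        gcongr
        exact add_mul_one_sub_half_le p q
    _ = (1 - (p - q) ^ 2) * (#S * (1 - p)) + (p - q) * (#S - #T) + #T * (1 - q) := by
        rw [cardS, cardT]
        ring
    _ ≤ (1 - (p - q) ^ 2) * ∑ x ∈ S, √(f x) + (p - q) * (#S - #T) + ∑ x ∈ T, √(g x) := by
        gcongr
        nlinarith [hpq.1, hpq.2]
    _ ≤ _ := by linarith

theorem card_mul_one_sub_le_sum_sqrt_boundaryDegree (S : Finset (V n)) :
    #S * (1 - #S / 2 ^ n) ≤ ∑ x ∈ S, √(boundaryDegree S x) := by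
  induction n with
  | zero =>
    have hS : #S ≤ 1 := (card_le_univ S).trans card_V.le
    refine le_trans ?_ (sum_nonneg fun _ _ ↦ Real.sqrt_nonneg _)
    interval_cases #S <;> simp
  | succ n ih =>
    have card_facet_le : ∀ a, (#(facet S a) : ℝ) ≤ 2 ^ n := fun a ↦ by
      exact_mod_cast (card_le_univ (facet S a)).trans card_V.le
    have zero_add_one : (0 : ZMod 2) + 1 = 1 := rfl
    have one_add_one : (1 : ZMod 2) + 1 = 0 := rfl
    rw [sum_eq_sum_facet_add_sum_facet, card_eq_card_facet_add_card_facet, pow_succ]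
    simp only [boundaryDegree_cons, zero_add_one, one_add_one, Nat.cast_add, Nat.cast_ite,
      Nat.cast_zero, Nat.cast_one]
    rcases le_total #(facet S 1) #(facet S 0) with hle | hle
    · exact card_add_card_mul_le_sum_sqrt (fun _ ↦ Nat.cast_nonneg _) (fun _ ↦ Nat.cast_nonneg _)
        (by positivity) (card_facet_le 0) hle (ih _) (ih _)
    · rw [add_comm (#(facet S 0) : ℝ), add_comm (∑ x ∈ facet S 0, _)]
      exact card_add_card_mul_le_sum_sqrt (fun _ ↦ Nat.cast_nonneg _) (fun _ ↦ Nat.cast_nonneg _)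
        (by positivity) (card_facet_le 1) hle (ih _) (ih _)

theorem boundaryDegree_compl_eq_zero {A : Finset (V n)} {b : V n}
    (hb : ∀ a ∈ A, 1 < hammingDist a b) : boundaryDegree Aᶜ b = 0 := by
  refine card_eq_zero.2 (filter_eq_empty_iff.2 fun i _ hi ↦ ?_)
  have hlt := hb _ (by simpa using hi)
  rw [hammingDist_comm, hammingDist_eq_one_iff_exists_flipCoord.2 ⟨i, rfl⟩] at hlt
  exact lt_irrefl 1 hlt

theorem card_mul_card_div_le_of_one_lt_hammingDist {A B : Finset (V n)}
    (hAB : ∀ a ∈ A, ∀ b ∈ B, 1 < hammingDist a b) :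
    #A * #B / 2 ^ n ≤ (2 ^ n - #A - #B) * √n := by
  have hBA : B ⊆ Aᶜ := fun b hb ↦ mem_compl.2 fun ha ↦ by
    simpa using hAB b ha b hb
  have card_compl : (#Aᶜ : ℝ) = 2 ^ n - #A := by
    rw [eq_sub_iff_add_eq]
    exact_mod_cast (card_compl_add_card A).trans card_V
  have card_sdiff : (#(Aᶜ \ B) : ℝ) = 2 ^ n - #A - #B := by
    rw [← card_compl, eq_sub_iff_add_eq]
    exact_mod_cast card_sdiff_add_card_eq_card hBA
  have hB : (#B : ℝ) ≤ 2 ^ n - #A := card_compl ▸ Nat.cast_le.2 (card_le_card hBA)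
  have sum_le : ∑ x ∈ Aᶜ, √(boundaryDegree Aᶜ x) ≤ #(Aᶜ \ B) * √n := by
    rw [← sum_subset sdiff_subset fun x hx hxB ↦ ?_, ← nsmul_eq_mul]
    · refine sum_le_card_nsmul _ _ _ fun x _ ↦ ?_
      gcongr
      exact boundaryDegree_le _ x
    · have hx : x ∈ B := by simpa [hx] using hxB
      simp [boundaryDegree_compl_eq_zero fun a ha ↦ hAB a ha x hx]
  calc (#A * #B / 2 ^ n : ℝ) ≤ #A * (2 ^ n - #A) / 2 ^ n := by gcongr
    _ = #Aᶜ * (1 - #Aᶜ / 2 ^ n) := by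
        rw [card_compl]
        field_simp
        ring
    _ ≤ #(Aᶜ \ B) * √n := (card_mul_one_sub_le_sum_sqrt_boundaryDegree Aᶜ).trans sum_le
    _ = (2 ^ n - #A - #B) * √n := by rw [card_sdiff]

/-- Deleting a coordinate is injective on each parity class. An even and an odd vertex of an
independent set differ in at least three coordinates, hence in at least two after the deletion. -/
theorem card_mul_card_div_le_of_isIndepSet {D : Finset (V (n + 1))}
    (hD : (Q (n + 1)).IsIndepSet D) :
    #(D ∩ evens (n + 1)) * #(D ∩ odds (n + 1)) / 2 ^ n ≤ (2 ^ n - #D : ℝ) * √n := by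
  have one_lt_dist : ∀ a ∈ (D ∩ evens (n + 1)).image Fin.tail,
      ∀ b ∈ (D ∩ odds (n + 1)).image Fin.tail, 1 < hammingDist a b := by
    simp only [mem_image, mem_inter, mem_evens, mem_odds]
    rintro _ ⟨x, ⟨hxD, hx⟩, rfl⟩ _ ⟨y, ⟨hyD, hy⟩, rfl⟩
    have hodd : ¬Even (hammingDist x y) := by
      rw [even_hammingDist]
      exact fun h ↦ Nat.not_even_iff_odd.2 hy (h.1 hx)
    have hne : hammingDist x y ≠ 1 := fun h ↦
      hD hxD hyD (by rintro rfl; simp at h) (Q_adj.2 h)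
    have hle := hammingDist_le_hammingDist_tail_add_one x y
    grind
  have hiso := card_mul_card_div_le_of_one_lt_hammingDist one_lt_dist
  rw [card_image_of_injOn (tail_injOn_evens.mono (by simp)),
    card_image_of_injOn (tail_injOn_odds.mono (by simp)), sub_sub, ← Nat.cast_add,
    card_inter_evens_add_card_inter_odds] at hiso
  exact hiso

end Isoperimetry

section Counting

variable {m : ℕ} {β : ℝ}

/-- The independent sets of `Q n` meeting both parity classes in more than `β * 2 ^ n` vertices. -/
def balancedIndepSets (n : ℕ) (β : ℝ) : Set (Finset (V n)) :=
  {I | (∀ x ∈ I, ∀ y ∈ I, ¬(Q n).Adj x y) ∧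
    β * 2 ^ n < (min (I ∩ evens n).card (I ∩ odds n).card : ℝ)}

theorem three_pow_mul_two_pow_le (ν k : ℕ) :
    (3 ^ ν * 2 ^ k : ℝ) ≤ 2 ^ (8 / 5 * ν + k : ℝ) := by
  have three_le : (3 : ℝ) ≤ 2 ^ (8 / 5 : ℝ) := by
    refine le_of_pow_le_pow_left₀ (n := 5) (by norm_num) (by positivity) ?_
    rw [← Real.rpow_mul_natCast (by norm_num)]
    norm_num
  calc (3 ^ ν * 2 ^ k : ℝ) ≤ (2 ^ (8 / 5 : ℝ)) ^ ν * 2 ^ k := by gcongr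
    _ = 2 ^ (8 / 5 * ν + k : ℝ) := by
        rw [Real.rpow_add two_pos, Real.rpow_mul_natCast two_pos.le, Real.rpow_natCast]

theorem card_le_of_card_neighborFinset_inter_le {C D : Finset (V (m + 1))} {ψ ν : ℕ}
    (hψ : 20 * ψ ≤ m + 1) (hDC : D ⊆ C) (hD : (Q (m + 1)).IsIndepSet D) (hν : #C = #D + 2 * ν)
    (hdeg : ∀ x ∈ C, #((Q (m + 1)).neighborFinset x ∩ C) ≤ ψ) :
    (#C : ℝ) ≤ 2 ^ m + ν / 10 := by
  have hcard : #(C \ D) = 2 * ν := by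
    rw [card_sdiff_of_subset hDC, hν, Nat.add_sub_cancel_left]
  have hnat : (m + 1) * #C ≤ (m + 1) * 2 ^ m + 2 * ν * ψ :=
    calc (m + 1) * #C ≤ (m + 1) * #(evens (m + 1)) + #(C \ D) * ψ :=
          mul_card_le_mul_card_add_card_sdiff_mul isRegularOfDegree_Q isIndepSet_compl_evens hdeg hD
      _ ≤ (m + 1) * 2 ^ m + 2 * ν * ψ := by
          rw [hcard]
          gcongr
          exact card_evens_succ_le
  have hreal : ((m + 1 : ℕ) : ℝ) * #C ≤ (m + 1 : ℕ) * 2 ^ m + 2 * ν * ψ := by exact_mod_cast hnat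
  have hψ' : (20 : ℝ) * ψ ≤ (m + 1 : ℕ) := by exact_mod_cast hψ
  refine le_of_mul_le_mul_left (hreal.trans ?_) (Nat.cast_pos.2 m.succ_pos)
  calc ((m + 1 : ℕ) : ℝ) * 2 ^ m + 2 * ν * ψ = (m + 1 : ℕ) * 2 ^ m + ν / 10 * (20 * ψ) := by ring
    _ ≤ (m + 1 : ℕ) * 2 ^ m + ν / 10 * (m + 1 : ℕ) := by gcongr
    _ = (m + 1 : ℕ) * (2 ^ m + ν / 10) := by ring

theorem card_add_le_of_balanced {D : Finset (V (m + 1))} (hβ : 0 < β)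
    (hD : (Q (m + 1)).IsIndepSet D) (hE : β * 2 ^ m ≤ #(D ∩ evens (m + 1)))
    (hO : β * 2 ^ m ≤ #(D ∩ odds (m + 1))) :
    #D + β ^ 2 * 2 ^ m / √(m + 1 : ℕ) ≤ 2 ^ m := by
  have hsqrt : 0 < √(m + 1 : ℕ) := Real.sqrt_pos.2 (Nat.cast_pos.2 m.succ_pos)
  have hiso : β ^ 2 * 2 ^ m ≤ (2 ^ m - #D) * √m :=
    calc β ^ 2 * 2 ^ m = β * 2 ^ m * (β * 2 ^ m) / 2 ^ m := by field_simp
      _ ≤ #(D ∩ evens (m + 1)) * #(D ∩ odds (m + 1)) / 2 ^ m := by gcongr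
      _ ≤ (2 ^ m - #D) * √m := card_mul_card_div_le_of_isIndepSet hD
  have hD_lt : (0 : ℝ) < 2 ^ m - #D :=
    pos_of_mul_pos_left (hiso.trans_lt' (by positivity)) (Real.sqrt_nonneg _)
  rw [← le_sub_iff_add_le', div_le_iff₀ hsqrt]
  exact hiso.trans (by gcongr; exact m.le_succ)

/-- If the matching is large, then `C` gains from the edges it spans; if it is small, then `D`
inherits the balance of `C` and the isoperimetric inequality applies to it. -/
theorem matching_add_card_le_of_balanced {C D : Finset (V (m + 1))} {ψ ν : ℕ} (hβ : 0 < β)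
    (hψ : 20 * ψ ≤ m + 1) (hdeg : ∀ x ∈ C, #((Q (m + 1)).neighborFinset x ∩ C) ≤ ψ)
    (hDC : D ⊆ C) (hD : (Q (m + 1)).IsIndepSet D) (hν : #C = #D + 2 * ν)
    (hE : β * 2 ^ (m + 1) < #(C ∩ evens (m + 1)))
    (hO : β * 2 ^ (m + 1) < #(C ∩ odds (m + 1))) :
    8 / 5 * ν + #D ≤ (2 : ℝ) ^ m - 3 / 40 * (β ^ 2 * 2 ^ m / √(m + 1 : ℕ)) := by
  set g := β ^ 2 * 2 ^ m / √(m + 1 : ℕ)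
  have hC := card_le_of_card_neighborFinset_inter_le hψ hDC hD hν hdeg
  have hCD : (#C : ℝ) = #D + 2 * ν := by exact_mod_cast hν
  rcases le_total (g / 4) ν with hlarge | hsmall
  · linarith
  · have hβ_le : β ≤ 1 := by
      have hlt : β * 2 * 2 ^ m < 1 * 2 ^ m :=
        calc β * 2 * 2 ^ m = β * 2 ^ (m + 1) := by ring
          _ < #(C ∩ evens (m + 1)) := hE
          _ ≤ 1 * 2 ^ m := by
            rw [one_mul]
            exact_mod_cast (card_le_card inter_subset_right).trans card_evens_succ_le
      linarith [lt_of_mul_lt_mul_right hlt (by positivity)]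
    have hg_le : g ≤ β * 2 ^ m :=
      calc g ≤ β ^ 2 * 2 ^ m :=
            div_le_self (by positivity) (Real.one_le_sqrt.2 (Nat.one_le_cast.2 m.succ_pos))
        _ ≤ β * 2 ^ m := by
            gcongr
            exact pow_le_of_le_one hβ.le hβ_le two_ne_zero
    have balanced_D : ∀ P, β * 2 ^ (m + 1) < #(C ∩ P) → β * 2 ^ m ≤ #(D ∩ P) := fun P hP ↦ by
      have hsub : C ∩ P ⊆ D ∩ P ∪ C \ D := by grind
      have hcard : (#(C ∩ P) : ℝ) ≤ #(D ∩ P) + 2 * ν := by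
        have hsdiff : #(C \ D) = 2 * ν := by
          rw [card_sdiff_of_subset hDC, hν, Nat.add_sub_cancel_left]
        exact_mod_cast hsdiff ▸ (card_le_card hsub).trans (card_union_le _ _)
      rw [pow_succ] at hP
      linarith
    linarith [card_add_le_of_balanced hβ hD (balanced_D _ hE) (balanced_D _ hO)]

theorem card_indepSubsets_le_of_balanced {C : Finset (V (m + 1))} {ψ : ℕ} (hβ : 0 < β)
    (hψ : 20 * ψ ≤ m + 1) (hdeg : ∀ x ∈ C, #((Q (m + 1)).neighborFinset x ∩ C) ≤ ψ)
    (hE : β * 2 ^ (m + 1) < #(C ∩ evens (m + 1)))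
    (hO : β * 2 ^ (m + 1) < #(C ∩ odds (m + 1))) :
    (#(indepSubsets (Q (m + 1)) C) : ℝ) ≤
      2 ^ ((2 : ℝ) ^ m - 3 / 40 * (β ^ 2 * 2 ^ m / √(m + 1 : ℕ))) := by
  obtain ⟨D, hDC, hD, ν, hν, hcount⟩ := exists_isIndepSet_card_indepSubsets_le (G := Q (m + 1)) C
  calc (#(indepSubsets (Q (m + 1)) C) : ℝ) ≤ 3 ^ ν * 2 ^ #D := by exact_mod_cast hcount
    _ ≤ 2 ^ (8 / 5 * ν + #D : ℝ) := three_pow_mul_two_pow_le ν #D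
    _ ≤ _ := Real.rpow_le_rpow_of_exponent_le one_le_two
        (matching_add_card_le_of_balanced hβ hψ hdeg hDC hD hν hE hO)

theorem ncard_balancedIndepSets_le {ψ : ℕ} (hβ : 0 < β) (hψ₀ : 0 < ψ) (hψ : 20 * ψ ≤ m + 1) :
    ((balancedIndepSets (m + 1) β).ncard : ℝ) ≤
      Real.exp (2 ^ (m + 1) / ψ * (Real.log ψ + 1)) *
        2 ^ ((2 : ℝ) ^ m - 3 / 40 * (β ^ 2 * 2 ^ m / √(m + 1 : ℕ))) := by
  obtain ⟨𝒞, hcard, hdeg, hcover⟩ := exists_containers (Q (m + 1)) hψ₀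
  rw [card_V, Nat.cast_pow, Nat.cast_two] at hcard
  let balanced : Finset (Finset (V (m + 1))) := {C ∈ 𝒞 |
    β * 2 ^ (m + 1) < #(C ∩ evens (m + 1)) ∧ β * 2 ^ (m + 1) < #(C ∩ odds (m + 1))}
  have subset_biUnion :
      balancedIndepSets (m + 1) β ⊆ balanced.biUnion (indepSubsets (Q (m + 1))) := by
    rintro I ⟨hI, hmin⟩
    have hindep : (Q (m + 1)).IsIndepSet I := fun x hx y hy _ ↦ hI x hx y hy
    obtain ⟨C, hC, hIC⟩ := hcover I hindep
    rw [lt_min_iff] at hmin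
    refine mem_biUnion.2 ⟨C, mem_filter.2 ⟨hC, hmin.1.trans_le ?_, hmin.2.trans_le ?_⟩,
      mem_indepSubsets.2 ⟨hIC, hindep⟩⟩ <;> gcongr
  calc ((balancedIndepSets (m + 1) β).ncard : ℝ)
      ≤ #(balanced.biUnion (indepSubsets (Q (m + 1)))) := by
        rw [← Set.ncard_coe_finset]
        exact_mod_cast Set.ncard_le_ncard subset_biUnion (finite_toSet _)
    _ ≤ ∑ C ∈ balanced, (#(indepSubsets (Q (m + 1)) C) : ℝ) := by exact_mod_cast card_biUnion_le
    _ ≤ #balanced * 2 ^ ((2 : ℝ) ^ m - 3 / 40 * (β ^ 2 * 2 ^ m / √(m + 1 : ℕ))) := by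
        rw [← nsmul_eq_mul]
        refine sum_le_card_nsmul _ _ _ fun C hC ↦ ?_
        obtain ⟨hC, hE, hO⟩ := mem_filter.1 hC
        exact card_indepSubsets_le_of_balanced hβ hψ (fun x hx ↦ (hdeg C hC x hx).le) hE hO
    _ ≤ _ := by
        gcongr
        exact (Nat.cast_le.2 (card_filter_le _ _)).trans hcard

end Counting

section Asymptotics

open Filter

theorem eventually_log_add_one_le_mul_sqrt {ε : ℝ} (hε : 0 < ε) :
    ∀ᶠ n : ℕ in atTop, Real.log n + 1 ≤ ε * √n := by
  have hlog : (fun x : ℝ ↦ Real.log x) =o[atTop] fun x ↦ x ^ (1 / 2 : ℝ) :=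
    isLittleO_log_rpow_atTop (by norm_num)
  have hone : (fun _ : ℝ ↦ (1 : ℝ)) =o[atTop] fun x ↦ x ^ (1 / 2 : ℝ) :=
    Asymptotics.isLittleO_const_left.2 <| Or.inr <|
      tendsto_norm_atTop_atTop.comp (tendsto_rpow_atTop (by norm_num))
  filter_upwards [((hlog.add hone).def hε).natCast_atTop] with n hn
  rw [← Real.sqrt_eq_rpow, Real.norm_of_nonneg (Real.sqrt_nonneg _)] at hn
  exact (le_abs_self _).trans hn

theorem eventually_exists_exp_le_two_rpow {ε : ℝ} (hε : 0 < ε) :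
    ∀ᶠ n : ℕ in atTop, ∃ ψ : ℕ, 0 < ψ ∧ 20 * ψ ≤ n ∧
      Real.exp (2 ^ n / ψ * (Real.log ψ + 1)) ≤ 2 ^ (ε * 2 ^ n / √n) := by
  filter_upwards [eventually_ge_atTop 40, eventually_log_add_one_le_mul_sqrt
    (show 0 < ε / 80 by positivity)] with n hn hlog
  have hψ₀ : 0 < n / 20 := by omega
  have hψn : (n / 40 : ℝ) ≤ (n / 20 : ℕ) := by
    rw [div_le_iff₀ (by norm_num)]
    exact_mod_cast (by omega : n ≤ n / 20 * 40)
  have hn₀ : (0 : ℝ) < n := by exact_mod_cast (by omega : 0 < n)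
  refine ⟨n / 20, hψ₀, by omega, ?_⟩
  have hlogψ : Real.log (n / 20 : ℕ) ≤ Real.log n :=
    Real.log_le_log (by positivity) (Nat.cast_le.2 (Nat.div_le_self n 20))
  have half_le_log_two : 1 / 2 ≤ Real.log 2 := by linarith [Real.log_two_gt_d9]
  rw [Real.rpow_def_of_pos two_pos]
  refine Real.exp_le_exp.2 ?_
  calc (2 ^ n / (n / 20 : ℕ) : ℝ) * (Real.log (n / 20 : ℕ) + 1)
      ≤ 2 ^ n / (n / 40) * (ε / 80 * √n) := by
        gcongr
        linarith
    _ = 1 / 2 * (ε * 2 ^ n / √n) := by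
        nth_rw 1 [← Real.mul_self_sqrt hn₀.le]
        field_simp
        norm_num
    _ ≤ Real.log 2 * (ε * 2 ^ n / √n) := by gcongr

theorem eventually_two_rpow_half_sub_sqrt_le {δ : ℝ} (hδ : 0 < δ) :
    ∀ᶠ n : ℕ in atTop, (2 : ℝ) ^ ((n : ℝ) / 2 - √n) ≤ δ * 2 ^ n / √n := by
  have one_lt_sqrt_two : 1 < √2 := Real.lt_sqrt_of_sq_lt (by norm_num)
  filter_upwards [(isLittleO_coe_const_pow_of_one_lt (R := ℝ) one_lt_sqrt_two).def hδ,
    eventually_ge_atTop 1] with n hn hpos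
  have one_le : (1 : ℝ) ≤ n := Nat.one_le_cast.2 hpos
  have sqrt_le : √n ≤ δ * √2 ^ n := by
    rw [Real.norm_natCast, Real.norm_of_nonneg (by positivity)] at hn
    exact (Real.sqrt_le_self_iff.2 (Or.inr one_le)).trans hn
  rw [le_div_iff₀ (by positivity)]
  calc (2 : ℝ) ^ ((n : ℝ) / 2 - √n) * √n ≤ √2 ^ n * (δ * √2 ^ n) := by
        gcongr
        rw [Real.sqrt_eq_rpow 2, ← Real.rpow_mul_natCast two_pos.le]
        exact Real.rpow_le_rpow_of_exponent_le one_le_two (by linarith [Real.sqrt_nonneg n])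
    _ = δ * 2 ^ n := by
        rw [mul_left_comm, ← mul_pow, Real.mul_self_sqrt two_pos.le]

end Asymptotics

theorem count_very_balanced_indep_sets_general (β : ℝ) (hβ : 0 < β) :
    ∃ δ : ℝ, 0 < δ ∧ ∀ᶠ n : ℕ in Filter.atTop,
      ((balancedIndepSets n β).ncard : ℝ) ≤ 2 ^ ((2 : ℝ) ^ (n - 1) - δ * 2 ^ n / √n) := by
  refine ⟨β ^ 2 / 80, by positivity, ?_⟩
  filter_upwards [eventually_exists_exp_le_two_rpow (show 0 < β ^ 2 / 40 by positivity),
    Filter.eventually_ge_atTop 1] with n ⟨ψ, hψ₀, hψ, hexp⟩ hn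
  obtain ⟨m, rfl⟩ := Nat.exists_eq_add_of_le' hn
  calc ((balancedIndepSets (m + 1) β).ncard : ℝ)
      ≤ Real.exp (2 ^ (m + 1) / ψ * (Real.log ψ + 1)) *
          2 ^ ((2 : ℝ) ^ m - 3 / 40 * (β ^ 2 * 2 ^ m / √(m + 1 : ℕ))) :=
        ncard_balancedIndepSets_le hβ hψ₀ hψ
    _ ≤ 2 ^ (β ^ 2 / 40 * 2 ^ (m + 1) / √(m + 1 : ℕ)) *
          2 ^ ((2 : ℝ) ^ m - 3 / 40 * (β ^ 2 * 2 ^ m / √(m + 1 : ℕ))) := by gcongr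
    _ = 2 ^ ((2 : ℝ) ^ m - β ^ 2 / 80 * 2 ^ (m + 1) / √(m + 1 : ℕ)) := by
        rw [← Real.rpow_add two_pos, pow_succ]
        congr 1
        ring

/-- For every `β > 0` there are `c > 0` and `n₀` such that for `n ≥ n₀` the number
of independent sets `I` in `Qₙ` with `min{|I ∩ ℰ|, |I ∩ 𝒪|} > β·2ⁿ` is at most
`2^(2^(n−1) − 2^(n/2 − c·√n))`. -/
theorem count_very_balanced_indep_sets (β : ℝ) (hβ : 0 < β) :
    ∃ c : ℝ, 0 < c ∧ ∃ n₀ : ℕ, ∀ n : ℕ, n₀ ≤ n →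
      ({I : Finset (V n) | (∀ x ∈ I, ∀ y ∈ I, ¬ (Q n).Adj x y) ∧
          β * 2 ^ n < (min (I ∩ evens n).card (I ∩ odds n).card : ℝ)}.ncard : ℝ) ≤
        2 ^ (((2 ^ (n - 1) : ℕ) : ℝ) - (2 : ℝ) ^ ((n : ℝ) / 2 - c * Real.sqrt n)) := by
  obtain ⟨δ, hδ, hcount⟩ := count_very_balanced_indep_sets_general β hβ
  obtain ⟨n₀, hn₀⟩ :=
    Filter.eventually_atTop.1 (hcount.and (eventually_two_rpow_half_sub_sqrt_le hδ))
  refine ⟨1, one_pos, n₀, fun n hn ↦ (hn₀ n hn).1.trans ?_⟩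
  rw [one_mul, Nat.cast_pow, Nat.cast_two]
  exact Real.rpow_le_rpow_of_exponent_le one_le_two (sub_le_sub_left (hn₀ n hn).2 _)
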